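/- arXiv:1111.1217 — 3 statements merged into one kernel-verified Lean document; each statement's English description precedes it below -/
import Mathlib

section
/- Let p, q, λ, Z be positive real numbers and let N, D, β, r₀ be real numbers with D ≠ 0. Then, as R → ∞, the normalized truncated Fresnel integral (1/(iλZ)) · ∫_{−R}^{R} ∫_{−R}^{R} exp( i·[ (2πN/D)(u·cosβ + v·sinβ) + (π/(λZ))·(p·(u − r₀)² + q·v²) ] ) du dv converges to (1/√(pq)) · exp( i·[ (2πN/D)·r₀·cosβ − (πλZN²/D²)·(cos²β/p + sin²β/q) ] ). -/
open Real Filter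

namespace PIAAFresnel

/-- Truncated Gaussian-type integral. -/
noncomputable def F (b : ℂ) (T : ℝ) : ℂ := ∫ x in (0:ℝ)..T, Complex.exp (-b * (x:ℂ) ^ 2)

/-- Absolutely convergent tail after integration by parts. -/
noncomputable def B (b : ℂ) : ℂ :=
  ∫ x in Set.Ioi (1:ℝ), Complex.exp (-b * (x:ℂ) ^ 2) / (x:ℂ) ^ 2

noncomputable def J (b : ℂ) : ℂ := F b 1 + Complex.exp (-b) / (2 * b) - B b / (2 * b)

lemma norm_le {b : ℂ} (hb : 0 ≤ b.re) (x : ℝ) : ‖Complex.exp (-b * (x:ℂ) ^ 2)‖ ≤ 1 := by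
  rw [norm_cexp_neg_mul_sq]
  apply Real.exp_le_one_iff.2
  nlinarith [mul_nonneg hb (sq_nonneg x)]

lemma bound_integrable : MeasureTheory.IntegrableOn (fun x : ℝ => x ^ (-2:ℝ)) (Set.Ioi 1) :=
  integrableOn_Ioi_rpow_of_lt (by norm_num) one_pos

lemma norm_le' {b : ℂ} (hb : 0 ≤ b.re) (x : ℝ) (hx : x ∈ Set.Ioi (1:ℝ)) :
    ‖Complex.exp (-b * (x:ℂ) ^ 2) / (x:ℂ) ^ 2‖ ≤ x ^ (-2:ℝ) := by
  have hx0 : (0:ℝ) < x := lt_trans one_pos hx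
  rw [norm_div, norm_pow, Complex.norm_real, Real.norm_of_nonneg hx0.le,
    Real.rpow_neg hx0.le, Real.rpow_two, div_eq_mul_inv]
  exact mul_le_of_le_one_left (by positivity) (norm_le hb x)

lemma meas (b : ℂ) : MeasureTheory.AEStronglyMeasurable
    (fun x : ℝ => Complex.exp (-b * (x:ℂ) ^ 2) / (x:ℂ) ^ 2)
    (MeasureTheory.volume.restrict (Set.Ioi 1)) := by
  apply Measurable.aestronglyMeasurable
  fun_prop

lemma integrableB {b : ℂ} (hb : 0 ≤ b.re) : MeasureTheory.IntegrableOn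
    (fun x : ℝ => Complex.exp (-b * (x:ℂ) ^ 2) / (x:ℂ) ^ 2) (Set.Ioi 1) := by
  refine MeasureTheory.Integrable.mono' bound_integrable (meas b) ?_
  filter_upwards [MeasureTheory.ae_restrict_mem measurableSet_Ioi] with x hx
  exact norm_le' hb x hx

lemma F_int (b : ℂ) (s t : ℝ) :
    IntervalIntegrable (fun x : ℝ => Complex.exp (-b * (x:ℂ) ^ 2)) MeasureTheory.volume s t :=
  Continuous.intervalIntegrable (by fun_prop) _ _

lemma F_eq {b : ℂ} (hb0 : b ≠ 0) {T : ℝ} (hT : 1 ≤ T) :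
    F b T = F b 1 + Complex.exp (-b) / (2 * b) - Complex.exp (-b * (T:ℂ) ^ 2) / (2 * b * T)
      - (∫ x in (1:ℝ)..T, Complex.exp (-b * (x:ℂ) ^ 2) / (x:ℂ) ^ 2) / (2 * b) := by
  have hne : ∀ x ∈ Set.uIcc 1 T, x ≠ 0 := by
    intro x hx
    rw [Set.uIcc_of_le hT] at hx
    have := hx.1
    intro h; subst h; norm_num at this
  have hcont : ContinuousOn (fun x : ℝ => Complex.exp (-b * (x:ℂ) ^ 2) / (x:ℂ) ^ 2)
      (Set.uIcc 1 T) := by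
    apply ContinuousOn.div (by fun_prop) (by fun_prop)
    intro x hx
    exact pow_ne_zero _ (Complex.ofReal_ne_zero.2 (hne x hx))
  have hI2 := hcont.intervalIntegrable (μ := MeasureTheory.volume)
  have key : ∫ x in (1:ℝ)..T, (Complex.exp (-b * (x:ℂ) ^ 2)
      + (Complex.exp (-b * (x:ℂ) ^ 2) / (x:ℂ) ^ 2) / (2 * b))
      = -Complex.exp (-b * (T:ℂ) ^ 2) / (2 * b * T)
        - -Complex.exp (-b * ((1:ℝ):ℂ) ^ 2) / (2 * b * (1:ℝ)) := by
    apply intervalIntegral.integral_eq_sub_of_hasDerivAt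
      (f := fun x : ℝ => -Complex.exp (-b * (x:ℂ) ^ 2) / (2 * b * x))
    · intro x hx
      have hx0 : (x:ℂ) ≠ 0 := Complex.ofReal_ne_zero.2 (hne x hx)
      have h1 : HasDerivAt (fun z : ℂ => -Complex.exp (-b * z ^ 2) / (2 * b * z)) _ (x:ℂ) :=
        (((((hasDerivAt_id (x:ℂ)).pow 2).const_mul (-b)).cexp).neg).div
          ((hasDerivAt_id (x:ℂ)).const_mul (2 * b)) (by simp [hb0, hx0])
      refine h1.comp_ofReal.congr_deriv ?_
      simp only [id, Nat.cast_ofNat, mul_one, Pi.pow_apply, Pi.neg_apply, Nat.add_one_sub_one,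
        Nat.reduceSub, pow_one]
      field_simp
      ring
    · exact (F_int b 1 T).add (hI2.div_const _)
  rw [intervalIntegral.integral_add (F_int b 1 T) (hI2.div_const _),
    intervalIntegral.integral_div] at key
  have hs := intervalIntegral.integral_add_adjacent_intervals (F_int b 0 1) (F_int b 1 T)
  unfold F
  rw [← hs, eq_sub_of_add_eq key]
  simp
  ring

lemma F_tendsto {b : ℂ} (hb0 : b ≠ 0) (hb : 0 ≤ b.re) : Tendsto (F b) atTop (nhds (J b)) := by
  have h1 := MeasureTheory.intervalIntegral_tendsto_integral_Ioi 1 (integrableB hb) tendsto_id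
  have h2 : Tendsto (fun T : ℝ => Complex.exp (-b * (T:ℂ) ^ 2) / (2 * b * T)) atTop (nhds 0) := by
    have h3 : Tendsto (fun T : ℝ => (1 / ‖2 * b‖) * T⁻¹) atTop (nhds ((1 / ‖2 * b‖) * 0)) :=
      tendsto_inv_atTop_zero.const_mul _
    rw [mul_zero] at h3
    refine squeeze_zero_norm' ?_ h3
    filter_upwards [eventually_gt_atTop 0] with T hT
    rw [norm_div, norm_mul (2 * b), Complex.norm_real, Real.norm_of_nonneg hT.le,
      ← one_div, div_mul_div_comm, one_mul]
    gcongr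
    exact norm_le hb T
  have h4 := ((tendsto_const_nhds (x := F b 1 + Complex.exp (-b) / (2 * b))).sub h2).sub
    (h1.div_const (2 * b))
  rw [sub_zero] at h4
  refine Tendsto.congr' ?_ h4
  filter_upwards [eventually_ge_atTop 1] with T hT
  exact (F_eq hb0 hT).symm

lemma J_eq {b : ℂ} (hb : 0 < b.re) : J b = (π / b) ^ (1 / 2 : ℂ) / 2 := by
  have hb0 : b ≠ 0 := by rintro rfl; simp at hb
  rw [← integral_gaussian_complex_Ioi hb]
  exact tendsto_nhds_unique (F_tendsto hb0 hb.le)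
    (MeasureTheory.intervalIntegral_tendsto_integral_Ioi 0
      (integrable_cexp_neg_mul_sq hb).integrableOn tendsto_id)

lemma J_cont {b : ℂ} (hb0 : b ≠ 0) :
    ContinuousWithinAt J {z : ℂ | 0 ≤ z.re} b := by
  have hF : Continuous (fun z : ℂ => F z 1) := by
    unfold F
    apply intervalIntegral.continuous_parametric_intervalIntegral_of_continuous'
    fun_prop
  have hB : ContinuousWithinAt B {z : ℂ | 0 ≤ z.re} b := by
    unfold B
    refine MeasureTheory.continuousWithinAt_of_dominated
      (bound := fun x : ℝ => x ^ (-2:ℝ)) ?_ ?_ bound_integrable ?_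
    · exact Eventually.of_forall meas
    · filter_upwards [self_mem_nhdsWithin] with z hz
      filter_upwards [MeasureTheory.ae_restrict_mem measurableSet_Ioi] with x hx
      exact norm_le' hz x hx
    · refine Eventually.of_forall fun x => ?_
      apply Continuous.continuousWithinAt
      fun_prop
  have h2 : ContinuousWithinAt (fun z : ℂ => 2 * z) {z : ℂ | 0 ≤ z.re} b := by fun_prop
  have h2b : 2 * b ≠ 0 := by simp [hb0]
  unfold J
  exact (hF.continuousWithinAt.add (ContinuousWithinAt.div (by fun_prop) h2 h2b)).sub
    (hB.div h2 h2b)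

lemma J_I {k : ℝ} (hk : 0 < k) :
    J (-(Complex.I * k)) = (Real.sqrt (π / k) : ℂ) * Complex.I ^ (1 / 2 : ℂ) / 2 := by
  have hk' : (k:ℂ) ≠ 0 := by exact_mod_cast hk.ne'
  have hb0 : -(Complex.I * k) ≠ 0 := by simp [hk']
  have hval : (π : ℂ) / (-(Complex.I * k)) = ((π / k : ℝ) : ℂ) * Complex.I := by
    push_cast
    field_simp
    simp
  have hpk : 0 < π / k := by positivity
  have hlim : Tendsto (fun e : ℝ => -(Complex.I * k) + (e:ℂ)) (nhdsWithin 0 (Set.Ioi 0))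
      (nhds (-(Complex.I * k))) := by
    have : Continuous (fun e : ℝ => -(Complex.I * k) + (e:ℂ)) := by fun_prop
    have h := this.tendsto 0
    simp only [Complex.ofReal_zero, add_zero] at h
    exact h.mono_left nhdsWithin_le_nhds
  have hre : ∀ᶠ e : ℝ in nhdsWithin 0 (Set.Ioi 0), 0 < (-(Complex.I * k) + (e:ℂ)).re := by
    filter_upwards [self_mem_nhdsWithin] with e he
    simpa using he
  have h1 : Tendsto (fun e : ℝ => J (-(Complex.I * k) + (e:ℂ))) (nhdsWithin 0 (Set.Ioi 0))
      (nhds (J (-(Complex.I * k)))) :=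
    (J_cont hb0).tendsto.comp
      (tendsto_nhdsWithin_iff.2 ⟨hlim, hre.mono fun e he => he.le⟩)
  have hc : ContinuousAt (fun b : ℂ => ((π : ℂ) / b) ^ (1 / 2 : ℂ) / 2) (-(Complex.I * k)) := by
    apply ContinuousAt.div_const
    refine ContinuousAt.cpow (continuousAt_const.div continuousAt_id hb0) continuousAt_const ?_
    change (π : ℂ) / (-(Complex.I * k)) ∈ _
    rw [hval, Complex.mem_slitPlane_iff]
    right
    simpa using hk.ne'
  have h2 := hc.tendsto.comp hlim
  have h3 := tendsto_nhds_unique (h1.congr' (hre.mono fun e he => J_eq he)) h2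
  rw [h3]
  simp only [hval]
  have hpkC : ((π / k : ℝ) : ℂ) ≠ 0 := Complex.ofReal_ne_zero.2 hpk.ne'
  have hmul : (((π / k : ℝ) : ℂ) * Complex.I) ^ (1 / 2 : ℂ)
      = ((π / k : ℝ) : ℂ) ^ (1 / 2 : ℂ) * Complex.I ^ (1 / 2 : ℂ) := by
    rw [Complex.cpow_def_of_ne_zero (mul_ne_zero hpkC Complex.I_ne_zero),
      Complex.cpow_def_of_ne_zero hpkC, Complex.cpow_def_of_ne_zero Complex.I_ne_zero,
      Complex.log_ofReal_mul hpk Complex.I_ne_zero, add_mul, Complex.exp_add,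
      Complex.ofReal_log hpk.le]
  rw [hmul, Real.sqrt_eq_rpow, Complex.ofReal_cpow hpk.le]
  norm_num

lemma F_neg (b : ℂ) (T : ℝ) : F b (-T) = - F b T := by
  unfold F
  have h := intervalIntegral.integral_comp_neg (a := 0) (b := T)
    (fun x : ℝ => Complex.exp (-b * (x:ℂ) ^ 2))
  rw [neg_zero] at h
  rw [intervalIntegral.integral_symm, ← h]
  simp

lemma one_dim {m : ℝ} (hm : 0 < m) (s r : ℝ) :
    Tendsto (fun R : ℝ => ∫ x in (-R)..R,
      Complex.exp (Complex.I * ((s * x + m * (x - r) ^ 2 : ℝ) : ℂ))) atTop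
      (nhds (Complex.exp (Complex.I * ((s * r - s ^ 2 / (4 * m) : ℝ) : ℂ)) *
        ((Real.sqrt (π / m) : ℂ) * Complex.I ^ (1 / 2 : ℂ)))) := by
  have hm' : (m:ℂ) ≠ 0 := by exact_mod_cast hm.ne'
  have hb0 : -(Complex.I * m) ≠ 0 := by simp [hm']
  set c : ℝ := r - s / (2 * m) with hc
  have hT := F_tendsto hb0 (by simp)
  rw [J_I hm] at hT
  have h1 := hT.comp (tendsto_atTop_add_const_right atTop (-c) tendsto_id)
  have h2 := hT.comp (tendsto_atTop_add_const_right atTop c tendsto_id)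
  have h3 := (h1.add h2).const_mul (Complex.exp (Complex.I * ((s * r - s ^ 2 / (4 * m) : ℝ) : ℂ)))
  rw [add_halves] at h3
  refine h3.congr fun R => ?_
  have e : ∀ x : ℝ, Complex.exp (Complex.I * ((s * x + m * (x - r) ^ 2 : ℝ) : ℂ)) =
      Complex.exp (Complex.I * ((s * r - s ^ 2 / (4 * m) : ℝ) : ℂ)) *
        (fun y : ℝ => Complex.exp (-(-(Complex.I * m)) * (y:ℂ) ^ 2)) (x - c) := by
    intro x
    simp only
    rw [← Complex.exp_add]
    congr 1
    rw [hc]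
    push_cast
    field_simp
    ring
  simp_rw [e]
  rw [intervalIntegral.integral_const_mul, intervalIntegral.integral_comp_sub_right
    (fun y : ℝ => Complex.exp (-(-(Complex.I * m)) * (y:ℂ) ^ 2))]
  congr 1
  rw [← intervalIntegral.integral_interval_sub_left (F_int _ 0 (R - c)) (F_int _ 0 (-R - c))]
  change F _ (R + -c) + F _ (R + c) = F _ (R - c) - F _ (-R - c)
  rw [show -R - c = -(R + c) by ring, F_neg, sub_neg_eq_add, sub_eq_add_neg R c]

end PIAAFresnel

/-- Theorem 1 of the paper (square-truncation form): a harmonic ripple of spatial frequency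
`N` and orientation `β`, propagated through the Fresnel-type PIAA kernel with radial
quadratic weight `p` and tangential weight `q`, emerges with amplitude `1/√(pq)`, the
geometrically remapped phase `(2πN/D) r₀ cos β`, and the angular-spectrum phase
`-(πλZN²/D²)(cos²β/p + sin²β/q)`. -/
theorem piaa_harmonic_ripple_propagation (p q lam Z : ℝ)
    (hp : 0 < p) (hq : 0 < q) (hlam : 0 < lam) (hZ : 0 < Z)
    (N D β r₀ : ℝ) (hD : D ≠ 0) :
    Tendsto (fun R : ℝ =>
        (1 / (Complex.I * lam * Z)) *
          ∫ u in (-R)..R, ∫ v in (-R)..R,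
            Complex.exp (Complex.I *
              ((((2 * π * N / D) * (u * Real.cos β + v * Real.sin β)
                + (π / (lam * Z)) * (p * (u - r₀) ^ 2 + q * v ^ 2)) : ℝ) : ℂ)))
      atTop
      (nhds (((1 / Real.sqrt (p * q) : ℝ) : ℂ) *
        Complex.exp (Complex.I *
          ((((2 * π * N / D) * r₀ * Real.cos β
            - (π * lam * Z * N ^ 2 / D ^ 2) *
                ((Real.cos β) ^ 2 / p + (Real.sin β) ^ 2 / q)) : ℝ) : ℂ)))) := by
  have hk : 0 < π / (lam * Z) := by positivity
  set a : ℝ := 2 * π * N / D with ha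
  set k : ℝ := π / (lam * Z) with hkdef
  have hu := PIAAFresnel.one_dim (mul_pos hk hp) (a * Real.cos β) r₀
  have hv := PIAAFresnel.one_dim (mul_pos hk hq) (a * Real.sin β) 0
  have h := (hu.mul hv).const_mul (1 / (Complex.I * lam * Z))
  have hII : Complex.I ^ (1 / 2 : ℂ) * Complex.I ^ (1 / 2 : ℂ) = Complex.I := by
    rw [← Complex.cpow_add _ _ Complex.I_ne_zero]
    norm_num
  have hsq : Real.sqrt (π / (k * p)) * Real.sqrt (π / (k * q))
      = lam * Z * (1 / Real.sqrt (p * q)) := by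
    rw [← Real.sqrt_mul (by positivity)]
    have : π / (k * p) * (π / (k * q)) = (lam * Z) ^ 2 / (p * q) := by
      rw [hkdef]; field_simp
    rw [this, Real.sqrt_div (by positivity), Real.sqrt_sq (by positivity)]
    ring
  have hlim : (1 / (Complex.I * lam * Z)) *
      (Complex.exp (Complex.I * ((a * Real.cos β * r₀
          - (a * Real.cos β) ^ 2 / (4 * (k * p)) : ℝ) : ℂ)) *
        ((Real.sqrt (π / (k * p)) : ℂ) * Complex.I ^ (1 / 2 : ℂ)) *
      (Complex.exp (Complex.I * ((a * Real.sin β * 0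
          - (a * Real.sin β) ^ 2 / (4 * (k * q)) : ℝ) : ℂ)) *
        ((Real.sqrt (π / (k * q)) : ℂ) * Complex.I ^ (1 / 2 : ℂ)))) =
      ((1 / Real.sqrt (p * q) : ℝ) : ℂ) *
        Complex.exp (Complex.I *
          (((a * r₀ * Real.cos β
            - (π * lam * Z * N ^ 2 / D ^ 2) *
                ((Real.cos β) ^ 2 / p + (Real.sin β) ^ 2 / q)) : ℝ) : ℂ)) := by
    have hphase : a * r₀ * Real.cos β - (π * lam * Z * N ^ 2 / D ^ 2) *
          ((Real.cos β) ^ 2 / p + (Real.sin β) ^ 2 / q)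
        = (a * Real.cos β * r₀ - (a * Real.cos β) ^ 2 / (4 * (k * p)))
          + (a * Real.sin β * 0 - (a * Real.sin β) ^ 2 / (4 * (k * q))) := by
      rw [ha, hkdef]; field_simp; ring
    have hsqC : (Real.sqrt (π / (k * p)) : ℂ) * (Real.sqrt (π / (k * q)) : ℂ)
        = lam * Z * ((1 / Real.sqrt (p * q) : ℝ) : ℂ) := by
      exact_mod_cast congrArg Complex.ofReal hsq
    have hl : (lam : ℂ) ≠ 0 := by exact_mod_cast hlam.ne'
    have hz : (Z : ℂ) ≠ 0 := by exact_mod_cast hZ.ne'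
    have hcoef : (1 / (Complex.I * lam * Z)) *
        (lam * Z * ((1 / Real.sqrt (p * q) : ℝ) : ℂ)) * Complex.I
        = ((1 / Real.sqrt (p * q) : ℝ) : ℂ) := by
      generalize ((1 / Real.sqrt (p * q) : ℝ) : ℂ) = w
      have := Complex.I_ne_zero
      field_simp
    rw [hphase, Complex.ofReal_add, mul_add, Complex.exp_add]
    conv_rhs => rw [← hcoef, ← hsqC]
    conv_rhs => enter [1, 2]; rw [← hII]
    ring
  rw [hlim] at h
  refine h.congr fun R => ?_
  congr 1
  rw [← intervalIntegral.integral_mul_const]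
  refine intervalIntegral.integral_congr fun u _ => ?_
  rw [← intervalIntegral.integral_const_mul]
  refine intervalIntegral.integral_congr fun v _ => ?_
  rw [← Complex.exp_add, ← mul_add, ← Complex.ofReal_add]
  congr 3
  ring
end

section
/- Let a : ℤ → ℝ be a function with finite support, let ψ ∈ ℝ, and let λ, λ₀ > 0. Define c : ℤ → ℝ by c(k) = Σ_{p=0}^{∞} a(k + p)·ψ^p / p! (a finite sum for each k). Then the family k ↦ i^k·(λ₀/λ)^k·c(k) (k ∈ ℤ, i^k the integer power of the complex unit i) is summable, and exp(−i·(λ/λ₀)·ψ) · Σ_{k ∈ ℤ} i^k·(λ₀/λ)^k·a(k) = Σ_{k ∈ ℤ} i^k·(λ₀/λ)^k·c(k). -/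
open Complex

/-- The re-indexing equivalence `(k, p) ↦ (k + p, p)`. -/
def shiftEquiv : ℤ × ℕ ≃ ℤ × ℕ where
  toFun := fun q => (q.1 + q.2, q.2)
  invFun := fun q => (q.1 - q.2, q.2)
  left_inv := fun q => by simp
  right_inv := fun q => by simp

theorem exp_series_summable_norm (w : ℂ) :
    Summable fun p : ℕ => ‖w ^ p / (p.factorial : ℂ)‖ :=
  NormedSpace.norm_expSeries_div_summable (𝔸 := ℂ) w

theorem exp_series_hasSum (w : ℂ) :
    HasSum (fun p : ℕ => w ^ p / (p.factorial : ℂ)) (Complex.exp w) := by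
  rw [Complex.exp_eq_exp_ℂ]
  exact NormedSpace.expSeries_div_hasSum_exp w

theorem field_summable_norm (a : ℤ → ℝ) (ha : (Function.support a).Finite) (z : ℂ) :
    Summable fun k : ℤ => ‖z ^ k * ((a k : ℝ) : ℂ)‖ := by
  refine summable_of_hasFiniteSupport (ha.subset fun k hk h => hk ?_)
  simp [h]

theorem shift_term (a : ℤ → ℝ) (ψ : ℝ) (z : ℂ) (hz : z ≠ 0) (k : ℤ) (p : ℕ) :
    z ^ k * ((a (k + p) * ψ ^ p / p.factorial : ℝ) : ℂ) =
      (z ^ (k + (p : ℤ)) * ((a (k + p) : ℝ) : ℂ)) *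
        (((ψ : ℂ) / z) ^ p / (p.factorial : ℂ)) := by
  have hzp : z ^ p ≠ 0 := pow_ne_zero _ hz
  rw [zpow_add₀ hz, zpow_natCast, div_pow]
  push_cast
  field_simp

theorem prod_hasSum (f : ℤ → ℂ) (g : ℕ → ℂ) (t : ℂ) (hf : Summable fun k => ‖f k‖)
    (hg : Summable fun p => ‖g p‖) (ht : HasSum g t) :
    HasSum (fun q : ℤ × ℕ => f q.1 * g q.2) ((∑' k, f k) * t) :=
  hf.of_norm.hasSum.mul ht (summable_mul_of_summable_norm hf hg)

theorem fiber_hasSum (f : ℤ → ℂ) (b : ℤ → ℕ → ℝ) (s : ℂ)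
    (h : HasSum (fun q : ℤ × ℕ => f q.1 * ((b q.1 q.2 : ℝ) : ℂ)) s) :
    HasSum (fun k : ℤ => f k * ((∑' p : ℕ, b k p : ℝ) : ℂ)) s := by
  refine h.prod_fiberwise fun k => ?_
  have hk : Summable fun p : ℕ => f k * ((b k p : ℝ) : ℂ) := h.summable.prod_factor k
  rw [Complex.ofReal_tsum, ← tsum_mul_left]
  exact hk.hasSum

theorem shift_hasSum (a : ℤ → ℝ) (ha : (Function.support a).Finite) (ψ : ℝ) (z : ℂ) (hz : z ≠ 0) :
    HasSum (fun k : ℤ => z ^ k * ((∑' p : ℕ, a (k + p) * ψ ^ p / p.factorial : ℝ) : ℂ))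
      ((∑' k : ℤ, z ^ k * ((a k : ℝ) : ℂ)) * Complex.exp ((ψ : ℂ) / z)) := by
  have hfs := field_summable_norm a ha z
  have hgs := exp_series_summable_norm ((ψ : ℂ) / z)
  have hg := exp_series_hasSum ((ψ : ℂ) / z)
  have hF := prod_hasSum _ _ _ hfs hgs hg
  have hE : HasSum (fun q : ℤ × ℕ => z ^ q.1 *
      ((a (q.1 + q.2) * ψ ^ q.2 / q.2.factorial : ℝ) : ℂ))
      ((∑' k : ℤ, z ^ k * ((a k : ℝ) : ℂ)) * Complex.exp ((ψ : ℂ) / z)) := by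
    rw [← shiftEquiv.hasSum_iff] at hF
    have hfun : (fun q : ℤ × ℕ => z ^ q.1 *
        ((a (q.1 + q.2) * ψ ^ q.2 / q.2.factorial : ℝ) : ℂ)) =
        (fun q : ℤ × ℕ => (z ^ q.1 * ((a q.1 : ℝ) : ℂ)) *
          (((ψ : ℂ) / z) ^ q.2 / (q.2.factorial : ℂ))) ∘ shiftEquiv := by
      funext q
      exact shift_term a ψ z hz q.1 q.2
    rw [hfun]
    exact hF
  exact fiber_hasSum _ (fun k p => a (k + p) * ψ ^ p / p.factorial) _ hE

/-- Analytic core of Theorem 2 (wavelength expansion of the propagated field): a field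
`Σ_k i^k (λ₀/λ)^k a(k)` with real, finitely supported coefficients, multiplied by the
chromatic propagator `exp(-i (λ/λ₀) ψ)`, again has an expansion of the same form with
real coefficients `c(k) = Σ_p a(k+p) ψ^p / p!`. -/
theorem piaa_wavelength_expansion (a : ℤ → ℝ) (ha : (Function.support a).Finite)
    (ψ lam lam0 : ℝ) (hlam : 0 < lam) (hlam0 : 0 < lam0) :
    Summable (fun k : ℤ => Complex.I ^ k * ((lam0 / lam : ℝ) : ℂ) ^ k *
        ((∑' p : ℕ, a (k + p) * ψ ^ p / p.factorial : ℝ) : ℂ)) ∧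
    Complex.exp (-Complex.I * (((lam / lam0) * ψ : ℝ) : ℂ)) *
        ∑' k : ℤ, Complex.I ^ k * ((lam0 / lam : ℝ) : ℂ) ^ k * ((a k : ℝ) : ℂ)
      = ∑' k : ℤ, Complex.I ^ k * ((lam0 / lam : ℝ) : ℂ) ^ k *
          ((∑' p : ℕ, a (k + p) * ψ ^ p / p.factorial : ℝ) : ℂ) := by
  have hI := Complex.I_ne_zero
  have h1 : (lam : ℂ) ≠ 0 := by exact_mod_cast hlam.ne'
  have h2 : (lam0 : ℂ) ≠ 0 := by exact_mod_cast hlam0.ne'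
  have hz : Complex.I * ((lam0 / lam : ℝ) : ℂ) ≠ 0 := by
    push_cast
    exact mul_ne_zero hI (div_ne_zero h2 h1)
  have hw : -Complex.I * (((lam / lam0) * ψ : ℝ) : ℂ)
      = (ψ : ℂ) / (Complex.I * ((lam0 / lam : ℝ) : ℂ)) := by
    rw [eq_div_iff hz]
    push_cast
    field_simp
    rw [Complex.I_sq]
    ring
  rw [hw]
  simp only [← mul_zpow]
  generalize Complex.I * ((lam0 / lam : ℝ) : ℂ) = z at hz ⊢
  have hT := shift_hasSum a ha ψ z hz
  exact ⟨hT.summable, by rw [hT.tsum_eq, mul_comm]⟩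
end

section
/- Let p, q, λ, Z be positive real numbers, D ≠ 0 and r₀ real, let J be a finite index set, and for each j ∈ J let b_j ∈ ℂ and N_j, β_j ∈ ℝ. Then, as R → ∞, (1/(iλZ)) · ∫_{−R}^{R} ∫_{−R}^{R} ( 1 + Σ_{j ∈ J} b_j·exp( i(2πN_j/D)(u·cosβ_j + v·sinβ_j) ) ) · exp( i(π/(λZ))(p(u − r₀)² + q v²) ) du dv converges to (1/√(pq)) · ( 1 + Σ_{j ∈ J} b_j·exp( i(2πN_j/D)·r₀·cosβ_j )·exp( −i(πλZN_j²/D²)(cos²β_j/p + sin²β_j/q) ) ). -/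
open Real Filter

lemma fresnel_parts (b : ℂ) (hb : b ≠ 0) (R : ℝ) (hR : 1 ≤ R) :
    ∫ x in (0:ℝ)..R, Complex.exp (-b * (x:ℂ) ^ 2) =
      (∫ x in (0:ℝ)..1, Complex.exp (-b * (x:ℂ) ^ 2)) + Complex.exp (-b) / (2 * b)
        - Complex.exp (-b * (R:ℂ) ^ 2) / (2 * b * R)
        - ∫ x in (1:ℝ)..R, Complex.exp (-b * (x:ℂ) ^ 2) / (2 * b * (x:ℂ) ^ 2) := by
  have hc : Continuous fun x : ℝ => Complex.exp (-b * (x:ℂ) ^ 2) := by fun_prop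
  have hpos : ∀ x ∈ Set.uIcc 1 R, (x:ℂ) ≠ 0 := by
    intro x hx
    rw [Set.uIcc_of_le hR] at hx
    exact_mod_cast (by linarith [hx.1] : (0:ℝ) < x).ne'
  have hc2 : ContinuousOn (fun x : ℝ => Complex.exp (-b * (x:ℂ) ^ 2) / (2 * b * (x:ℂ) ^ 2))
      (Set.uIcc 1 R) := by
    apply ContinuousOn.div hc.continuousOn (by fun_prop)
    intro x hx
    simp [hb, hpos x hx]
  rw [← intervalIntegral.integral_add_adjacent_intervals (hc.intervalIntegrable 0 1)
    (hc.intervalIntegrable 1 R)]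
  have key := intervalIntegral.integral_eq_sub_of_hasDerivAt
    (f := fun x : ℝ => - Complex.exp (-b * (x:ℂ) ^ 2) / (2 * b * x))
    (f' := fun x : ℝ => Complex.exp (-b * (x:ℂ) ^ 2) +
      Complex.exp (-b * (x:ℂ) ^ 2) / (2 * b * (x:ℂ) ^ 2)) (a := 1) (b := R)
    (by
      intro x hx
      have h0 := hpos x hx
      have h1 : HasDerivAt (fun z : ℂ => - Complex.exp (-b * z ^ 2) / (2 * b * z))
        (Complex.exp (-b * (x:ℂ) ^ 2) + Complex.exp (-b * (x:ℂ) ^ 2) / (2 * b * (x:ℂ) ^ 2))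
        (x:ℂ) := by
        have h2 := (((hasDerivAt_pow 2 (x:ℂ)).const_mul (-b)).cexp.neg).div
          ((hasDerivAt_id (x:ℂ)).const_mul (2 * b)) (by simp [hb, h0])
        refine h2.congr_deriv ?_
        simp only [id, Pi.neg_apply]
        field_simp
        push_cast
        ring
      exact h1.comp_ofReal)
    ((hc.continuousOn.add hc2).intervalIntegrable)
  rw [intervalIntegral.integral_add (hc.intervalIntegrable 1 R) hc2.intervalIntegrable] at key
  rw [eq_sub_of_add_eq key]
  push_cast
  ring_nf

lemma fresnel_bound (b : ℂ) (hb : 0 ≤ b.re) (x : ℝ) : ‖Complex.exp (-b * (x:ℂ) ^ 2)‖ ≤ 1 := by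
  rw [Complex.norm_exp]
  have : (-b * (x:ℂ) ^ 2).re = - (b.re * x ^ 2) := by
    rw [← Complex.ofReal_pow, Complex.re_mul_ofReal]; simp
  rw [this]
  exact Real.exp_le_one_iff.2 (by have := mul_nonneg hb (sq_nonneg x); linarith)

lemma fresnel_bound2 (b : ℂ) (hb : 0 ≤ b.re) (hb1 : 1 ≤ ‖b‖) (x : ℝ) :
    ‖Complex.exp (-b * (x:ℂ) ^ 2) / (2 * b * (x:ℂ) ^ 2)‖ ≤ x ^ (-2 : ℝ) := by
  have h2 : x ^ (-2 : ℝ) = (x ^ 2)⁻¹ := by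
    rw [show (-2:ℝ) = ((-2:ℤ):ℝ) by norm_num, Real.rpow_intCast]; rfl
  rw [h2, norm_div, norm_mul, norm_mul, norm_pow, Complex.norm_real]
  simp only [Complex.norm_ofNat, Real.norm_eq_abs, sq_abs]
  rcases eq_or_ne x 0 with rfl | hx
  · simp
  rw [← one_div]
  have hx2 : 0 < x ^ 2 := by positivity
  apply div_le_div₀ zero_le_one (fresnel_bound b hb x) hx2
  nlinarith

noncomputable def fresnelH (b : ℂ) : ℂ :=
  (∫ x in (0:ℝ)..1, Complex.exp (-b * (x:ℂ) ^ 2)) + Complex.exp (-b) / (2 * b)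
    - ∫ x in Set.Ioi (1:ℝ), Complex.exp (-b * (x:ℂ) ^ 2) / (2 * b * (x:ℂ) ^ 2)

lemma rpow_int : MeasureTheory.IntegrableOn (fun x : ℝ => x ^ (-2:ℝ)) (Set.Ioi 1) :=
  integrableOn_Ioi_rpow_of_lt (by norm_num) one_pos

lemma fresnel_meas (b : ℂ) : MeasureTheory.AEStronglyMeasurable
    (fun x : ℝ => Complex.exp (-b * (x:ℂ) ^ 2) / (2 * b * (x:ℂ) ^ 2))
    (MeasureTheory.volume.restrict (Set.Ioi 1)) := by
  apply Measurable.aestronglyMeasurable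
  fun_prop

lemma fresnel_tendsto (b : ℂ) (hb : 0 ≤ b.re) (hb1 : 1 ≤ ‖b‖) :
    Tendsto (fun R : ℝ => ∫ x in (0:ℝ)..R, Complex.exp (-b * (x:ℂ) ^ 2)) atTop
      (nhds (fresnelH b)) := by
  have hb0 : b ≠ 0 := by rintro rfl; simp at hb1; linarith
  have hint : MeasureTheory.IntegrableOn
      (fun x : ℝ => Complex.exp (-b * (x:ℂ) ^ 2) / (2 * b * (x:ℂ) ^ 2)) (Set.Ioi 1) :=
    MeasureTheory.Integrable.mono' rpow_int (fresnel_meas b)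
      (Eventually.of_forall fun x => fresnel_bound2 b hb hb1 x)
  have h1 := MeasureTheory.intervalIntegral_tendsto_integral_Ioi 1 hint tendsto_id
  have h2 : Tendsto (fun R : ℝ => Complex.exp (-b * (R:ℂ) ^ 2) / (2 * b * R)) atTop (nhds 0) := by
    apply squeeze_zero_norm' (a := fun R : ℝ => R⁻¹) _ tendsto_inv_atTop_zero
    filter_upwards [eventually_ge_atTop 1] with R hR
    rw [norm_div, norm_mul, norm_mul, Complex.norm_real]
    simp only [Complex.norm_ofNat, Real.norm_eq_abs, abs_of_pos (by linarith : 0 < R)]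
    rw [← one_div]
    apply div_le_div₀ zero_le_one (fresnel_bound b hb R) (by linarith)
    nlinarith
  have h3 := (h2.const_sub ((∫ x in (0:ℝ)..1, Complex.exp (-b * (x:ℂ) ^ 2))
    + Complex.exp (-b) / (2 * b))).sub h1
  rw [sub_zero] at h3
  refine h3.congr' ?_
  filter_upwards [eventually_ge_atTop 1] with R hR
  rw [fresnel_parts b hb0 R hR]
  rfl

lemma fresnelH_eq (b : ℂ) (hb : 0 < b.re) (hb1 : 1 ≤ ‖b‖) :
    fresnelH b = (π / b) ^ (1 / 2 : ℂ) / 2 := by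
  rw [← integral_gaussian_complex_Ioi hb]
  refine tendsto_nhds_unique (fresnel_tendsto b hb.le hb1) ?_
  exact MeasureTheory.intervalIntegral_tendsto_integral_Ioi 0
    (integrable_cexp_neg_mul_sq hb).integrableOn tendsto_id

lemma fresnelH_lim : Tendsto (fun e : ℝ => fresnelH (e - Complex.I)) (nhdsWithin 0 (Set.Ioi 0))
    (nhds (fresnelH (-Complex.I))) := by
  have hre : ∀ e : ℝ, ((e:ℂ) - Complex.I).re = e := by simp
  have hn : ∀ e : ℝ, 1 ≤ ‖(e:ℂ) - Complex.I‖ := by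
    intro e
    have := Complex.abs_im_le_norm ((e:ℂ) - Complex.I)
    simpa using this
  have hne : ∀ e : ℝ, (e:ℂ) - Complex.I ≠ 0 := by
    intro e h; have := hn e; rw [h] at this; simp at this; linarith
  have hev : ∀ᶠ e : ℝ in nhdsWithin 0 (Set.Ioi 0), 0 ≤ e := by
    filter_upwards [self_mem_nhdsWithin] with e he using le_of_lt he
  have z : -Complex.I = ((0:ℝ):ℂ) - Complex.I := by simp
  rw [z]
  unfold fresnelH
  have t : ∀ {f : ℝ → ℂ}, Continuous f → Tendsto f (nhdsWithin 0 (Set.Ioi 0)) (nhds (f 0)) :=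
    fun h => h.continuousAt.tendsto.mono_left nhdsWithin_le_nhds
  refine Tendsto.sub (Tendsto.add ?_ ?_) ?_
  · apply intervalIntegral.tendsto_integral_filter_of_dominated_convergence (fun _ => (1:ℝ))
    · exact Eventually.of_forall fun e => Continuous.aestronglyMeasurable (by fun_prop)
    · filter_upwards [hev] with e he
      exact Eventually.of_forall fun x _ => fresnel_bound _ (by rw [hre]; exact he) x
    · simp
    · refine Eventually.of_forall fun x _ => ?_
      exact t (f := fun e : ℝ => Complex.exp (-((e:ℂ) - Complex.I) * (x:ℂ) ^ 2)) (by fun_prop)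
  · refine t (f := fun e : ℝ => Complex.exp (-((e:ℂ) - Complex.I)) / (2 * ((e:ℂ) - Complex.I))) ?_
    refine Continuous.div (by fun_prop) (by fun_prop) fun e => ?_
    simpa using hne e
  · apply MeasureTheory.tendsto_integral_filter_of_dominated_convergence
      (fun x : ℝ => x ^ (-2:ℝ))
    · exact Eventually.of_forall fun e => fresnel_meas _
    · filter_upwards [hev] with e he
      exact Eventually.of_forall fun x => fresnel_bound2 _ (by rw [hre]; exact he) (hn e) x
    · exact rpow_int
    · refine (MeasureTheory.ae_restrict_mem measurableSet_Ioi).mono fun x hx => ?_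
      have hx0 : (x:ℂ) ≠ 0 := by
        exact_mod_cast (lt_trans one_pos hx).ne'
      refine t (f := fun e : ℝ => Complex.exp (-((e:ℂ) - Complex.I) * (x:ℂ) ^ 2)
        / (2 * ((e:ℂ) - Complex.I) * (x:ℂ) ^ 2)) ?_
      refine Continuous.div (by fun_prop) (by fun_prop) fun e => ?_
      simp [hne e, hx0]

lemma fresnelH_sq : (2 * fresnelH (-Complex.I)) ^ 2 = π * Complex.I := by
  have hn : ∀ e : ℝ, 1 ≤ ‖(e:ℂ) - Complex.I‖ := by
    intro e
    have := Complex.abs_im_le_norm ((e:ℂ) - Complex.I)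
    simpa using this
  have h1 := (fresnelH_lim.const_mul 2).pow 2
  have h2 : Tendsto (fun e : ℝ => (π:ℂ) / ((e:ℂ) - Complex.I)) (nhdsWithin 0 (Set.Ioi 0))
      (nhds (π / (((0:ℝ):ℂ) - Complex.I))) := by
    have : ContinuousAt (fun e : ℝ => (π:ℂ) / ((e:ℂ) - Complex.I)) 0 := by
      apply ContinuousAt.div (by fun_prop) (by fun_prop)
      simp
    exact this.tendsto.mono_left nhdsWithin_le_nhds
  have h3 := tendsto_nhds_unique (h1.congr' ?_) h2
  · rw [h3]; simp [div_neg]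
  · filter_upwards [self_mem_nhdsWithin] with e he
    rw [fresnelH_eq _ (by simpa using he) (hn e), mul_div_cancel₀ _ two_ne_zero, one_div]
    exact Complex.cpow_nat_inv_pow _ two_ne_zero

lemma fresnel_shift (a r k : ℝ) (ha : 0 < a) :
    Tendsto (fun R : ℝ => ∫ u in (-R)..R,
      Complex.exp (Complex.I * ((a * (u - r) ^ 2 + k * u : ℝ) : ℂ))) atTop
      (nhds (Complex.exp (Complex.I * ((k * r - k ^ 2 / (4 * a) : ℝ) : ℂ)) *
        (2 * fresnelH (-Complex.I) / (√a : ℝ)))) := by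
  have hs : 0 < √a := Real.sqrt_pos.2 ha
  have hss : √a ^ 2 = a := Real.sq_sqrt ha.le
  set f : ℝ → ℂ := fun x => Complex.exp (-(-Complex.I) * (x:ℂ) ^ 2) with hf
  have hc : Continuous f := by fun_prop
  have hT : Tendsto (fun R : ℝ => ∫ x in (0:ℝ)..R, f x) atTop (nhds (fresnelH (-Complex.I))) :=
    fresnel_tendsto _ (by simp) (by simp)
  have hodd : ∀ R : ℝ, ∫ x in (-R)..0, f x = ∫ x in (0:ℝ)..R, f x := by
    intro R
    have := intervalIntegral.integral_comp_neg (a := 0) (b := R) f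
    rw [neg_zero] at this
    rw [← this]
    simp [hf]
  set s : ℝ := r - k / (2 * a) with hsdef
  have l1 : Tendsto (fun R : ℝ => √a * R - √a * s) atTop atTop :=
    tendsto_atTop_add_const_right _ _ (tendsto_id.const_mul_atTop hs)
  have l2 : Tendsto (fun R : ℝ => √a * R + √a * s) atTop atTop :=
    tendsto_atTop_add_const_right _ _ (tendsto_id.const_mul_atTop hs)
  have hsum := ((((hT.comp l2).add (hT.comp l1)).const_mul ((√a : ℝ) : ℂ)⁻¹).const_mul
    (Complex.exp (Complex.I * ((k * r - k ^ 2 / (4 * a) : ℝ) : ℂ))))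
  refine Tendsto.congr ?_ (hsum.trans (le_of_eq ?_))
  · intro R
    have e1 : ∀ u : ℝ, Complex.exp (Complex.I * ((a * (u - r) ^ 2 + k * u : ℝ) : ℂ)) =
        Complex.exp (Complex.I * ((k * r - k ^ 2 / (4 * a) : ℝ) : ℂ)) * f (√a * u - √a * s) := by
      intro u
      have : a * (u - r) ^ 2 + k * u = (k * r - k ^ 2 / (4 * a)) + (√a * u - √a * s) ^ 2 := by
        rw [← mul_sub, mul_pow, hss, hsdef]
        field_simp
        ring
      rw [this, hf, ← Complex.exp_add]
      push_cast
      ring_nf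
    simp_rw [e1]
    rw [intervalIntegral.integral_const_mul,
      intervalIntegral.integral_comp_mul_sub f hs.ne',
      ← intervalIntegral.integral_add_adjacent_intervals (hc.intervalIntegrable _ 0)
      (hc.intervalIntegrable 0 _),
      show √a * -R - √a * s = -(√a * R + √a * s) by ring, hodd]
    simp only [Function.comp, Complex.real_smul, Complex.ofReal_inv]
  · congr 1
    ring

lemma fresnel_2d (a a' r k k' : ℝ) (ha : 0 < a) (ha' : 0 < a') :
    Tendsto (fun R : ℝ => ∫ u in (-R)..R, ∫ v in (-R)..R,
      Complex.exp (Complex.I * ((a * (u - r) ^ 2 + k * u : ℝ) : ℂ)) *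
      Complex.exp (Complex.I * ((a' * (v - 0) ^ 2 + k' * v : ℝ) : ℂ))) atTop
      (nhds (Complex.exp (Complex.I * ((k * r - k ^ 2 / (4 * a) - k' ^ 2 / (4 * a') : ℝ) : ℂ)) *
        (π * Complex.I / (√(a * a') : ℝ)))) := by
  have h := (fresnel_shift a r k ha).mul (fresnel_shift a' 0 k' ha')
  refine Tendsto.congr ?_ (h.trans (le_of_eq ?_))
  · intro R
    simp_rw [intervalIntegral.integral_const_mul, intervalIntegral.integral_mul_const]
  · congr 1
    rw [← fresnelH_sq, Real.sqrt_mul ha.le]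
    rw [show k * r - k ^ 2 / (4 * a) - k' ^ 2 / (4 * a') =
      (k * r - k ^ 2 / (4 * a)) + (k' * 0 - k' ^ 2 / (4 * a')) by ring]
    rw [Complex.ofReal_add, mul_add, Complex.exp_add, Complex.ofReal_mul]
    ring



/-- Propagation of an aberrated wavefront through the PIAA kernel (Section 4): an input
field `1 + Σⱼ bⱼ exp(i(2πNⱼ/D)(u cos βⱼ + v sin βⱼ))` propagated through the Fresnel-type
kernel with radial weight `p` and tangential weight `q` converges (square truncation) to
the apodized sum of remapped ripples, each multiplied by its angular-spectrum factor. -/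
theorem piaa_aberrated_field_propagation {ι : Type*} [Fintype ι]
    (p q lam Z : ℝ) (hp : 0 < p) (hq : 0 < q) (hlam : 0 < lam) (hZ : 0 < Z)
    (D r₀ : ℝ) (hD : D ≠ 0) (b : ι → ℂ) (N β : ι → ℝ) :
    Tendsto (fun R : ℝ =>
        (1 / (Complex.I * lam * Z)) *
          ∫ u in (-R)..R, ∫ v in (-R)..R,
            (1 + ∑ j : ι, b j *
                Complex.exp (Complex.I *
                  (((2 * π * N j / D) * (u * Real.cos (β j) + v * Real.sin (β j)) : ℝ) : ℂ))) *
              Complex.exp (Complex.I *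
                (((π / (lam * Z)) * (p * (u - r₀) ^ 2 + q * v ^ 2) : ℝ) : ℂ)))
      atTop
      (nhds (((1 / Real.sqrt (p * q) : ℝ) : ℂ) *
        (1 + ∑ j : ι, b j *
            Complex.exp (Complex.I * (((2 * π * N j / D) * r₀ * Real.cos (β j) : ℝ) : ℂ)) *
            Complex.exp (-Complex.I *
              (((π * lam * Z * N j ^ 2 / D ^ 2) *
                  ((Real.cos (β j)) ^ 2 / p + (Real.sin (β j)) ^ 2 / q) : ℝ) : ℂ))))) := by
  have hκ : 0 < π / (lam * Z) := by positivity
  set κ := π / (lam * Z) with hκd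
  have hc : (1 / (Complex.I * lam * Z)) * (π * Complex.I / (√(κ * p * (κ * q)) : ℝ))
      = ((1 / Real.sqrt (p * q) : ℝ) : ℂ) := by
    rw [show κ * p * (κ * q) = κ ^ 2 * (p * q) by ring, Real.sqrt_mul (by positivity),
      Real.sqrt_sq hκ.le, hκd]
    have h1 : (√(p * q) : ℂ) ≠ 0 := by
      exact_mod_cast (Real.sqrt_pos.2 (mul_pos hp hq)).ne'
    have h2 : (lam : ℂ) ≠ 0 := by exact_mod_cast hlam.ne'
    have h3 : (Z : ℂ) ≠ 0 := by exact_mod_cast hZ.ne'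
    have h4 : (π : ℂ) ≠ 0 := by exact_mod_cast Real.pi_pos.ne'
    push_cast
    field_simp
  have h0 := fresnel_2d (κ * p) (κ * q) r₀ 0 0 (by positivity) (by positivity)
  have hj := fun j => (fresnel_2d (κ * p) (κ * q) r₀ (2 * π * N j / D * Real.cos (β j))
    (2 * π * N j / D * Real.sin (β j)) (by positivity) (by positivity)).const_mul (b j)
  have hall := ((h0.add (tendsto_finsetSum Finset.univ fun j _ => hj j)).const_mul
    (1 / (Complex.I * lam * Z)))
  refine Tendsto.congr ?_ (hall.trans (le_of_eq ?_))
  · intro R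
    congr 1
    simp_rw [← intervalIntegral.integral_const_mul]
    rw [← intervalIntegral.integral_finsetSum, ← intervalIntegral.integral_add]
    rotate_left
    · apply Continuous.intervalIntegrable
      simp_rw [intervalIntegral.integral_const_mul]
      fun_prop
    · apply Continuous.intervalIntegrable
      simp_rw [intervalIntegral.integral_const_mul]
      fun_prop
    · intro j _
      apply Continuous.intervalIntegrable
      simp_rw [intervalIntegral.integral_const_mul]
      fun_prop
    congr 1
    funext u
    rw [← intervalIntegral.integral_finsetSum, ← intervalIntegral.integral_add]
    rotate_left
    · exact Continuous.intervalIntegrable (by fun_prop) _ _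
    · exact Continuous.intervalIntegrable (by fun_prop) _ _
    · exact fun j _ => Continuous.intervalIntegrable (by fun_prop) _ _
    congr 1
    funext v
    rw [add_mul, one_mul, Finset.sum_mul]
    congr 1
    · rw [← Complex.exp_add]
      push_cast
      ring_nf
    · refine Finset.sum_congr rfl fun j _ => ?_
      rw [mul_assoc (b j), ← Complex.exp_add, ← Complex.exp_add]
      push_cast
      ring_nf
  · congr 1
    rw [← hc, mul_assoc (1 / (Complex.I * lam * Z))]
    congr 1
    rw [mul_add, Finset.mul_sum]
    congr 1
    · simp
    · refine Finset.sum_congr rfl fun j _ => ?_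
      have : 2 * π * N j / D * Real.cos (β j) * r₀
          - (2 * π * N j / D * Real.cos (β j)) ^ 2 / (4 * (κ * p))
          - (2 * π * N j / D * Real.sin (β j)) ^ 2 / (4 * (κ * q))
          = (2 * π * N j / D) * r₀ * Real.cos (β j) - (π * lam * Z * N j ^ 2 / D ^ 2) *
                  ((Real.cos (β j)) ^ 2 / p + (Real.sin (β j)) ^ 2 / q) := by
        rw [hκd]
        have := Real.pi_pos.ne'
        field_simp
        ring
      rw [this, Complex.ofReal_sub, mul_sub, sub_eq_add_neg, ← neg_mul, Complex.exp_add]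
      ring
end
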